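/- Assume Hypothesis (H) and let ε₀ := 1/(2 C_R ‖M‖). Then for every ε ∈ (0, ε₀), the operator B_ε := M + ε⁻¹ A (with domain dom(A)) is boundedly invertible and the identity π_N B_ε⁻¹ = ι_N B_{ε,N}⁻¹ ( ι_N* − ι_N* M π_R B_ε⁻¹ ) holds as an identity of bounded operators from H to H. -/

import Mathlib

/-!
The operator `B = M + ε⁻¹ A` is closed, and both `B` and `B† = M† + ε⁻¹ A†` satisfy
`Re ⟪B x, x⟫ ≥ c ‖x‖²`. The bound for `B` makes it injective with closed range, the one for `B†`
makes the range dense, so `B` is boundedly invertible; the same coercivity passes to the compression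
`B_N` of `B` to `N`, which is bounded by the closed graph theorem. Since `A` maps `R ∩ dom A` into
`R = Nᗮ`, projecting `B x = y` to `N` leaves `B_N (π_N x) + π_N M π_R x = π_N y`, and applying
`B_N⁻¹` gives the identity.
-/

section ClosedOperators

variable {𝕜 E F : Type*} [NontriviallyNormedField 𝕜]
  [NormedAddCommGroup E] [NormedSpace 𝕜 E] [NormedAddCommGroup F] [NormedSpace 𝕜 F]

theorem isClosed_linearPMap_vadd {T : E →ₗ.[𝕜] F} (hT : T.IsClosed) (M : E →L[𝕜] F) :
    ((M : E →ₗ[𝕜] F) +ᵥ T).IsClosed := by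
  have graph_eq : (((M : E →ₗ[𝕜] F) +ᵥ T).graph : Set (E × F)) =
      (fun p : E × F ↦ (p.1, p.2 - M p.1)) ⁻¹' T.graph := by
    ext ⟨a, b⟩
    simp only [Set.mem_preimage, SetLike.mem_coe, LinearPMap.mem_graph_iff]
    refine exists_congr fun x ↦ and_congr_right fun hx ↦ ?_
    rw [LinearPMap.vadd_apply, ContinuousLinearMap.coe_coe, hx, eq_sub_iff_add_eq, add_comm]
  rw [LinearPMap.IsClosed, graph_eq]
  exact hT.preimage (by fun_prop)

theorem isClosed_linearPMap_smul {T : E →ₗ.[𝕜] F} (hT : T.IsClosed) {a : 𝕜} (ha : a ≠ 0) :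
    (a • T).IsClosed := by
  have graph_eq : ((a • T).graph : Set (E × F)) =
      (fun p : E × F ↦ (p.1, a⁻¹ • p.2)) ⁻¹' T.graph := by
    ext ⟨x, y⟩
    simp only [Set.mem_preimage, SetLike.mem_coe, LinearPMap.mem_graph_iff]
    exact exists_congr fun x ↦ and_congr_right fun _ ↦ (eq_inv_smul_iff₀ ha).symm
  rw [LinearPMap.IsClosed, graph_eq]
  exact hT.preimage (by fun_prop)

variable [CompleteSpace F]

theorem continuous_linearPMap_comp_inclusion {T : E →ₗ.[𝕜] F} (hT : T.IsClosed)
    {N : Submodule 𝕜 E} [CompleteSpace N] (hN : N ≤ T.domain) :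
    Continuous (T.toFun ∘ₗ Submodule.inclusion hN) := by
  apply LinearMap.continuous_of_isClosed_graph
  have graph_eq : ((T.toFun ∘ₗ Submodule.inclusion hN).graph : Set (N × F)) =
      (fun p : N × F ↦ ((p.1 : E), p.2)) ⁻¹' T.graph := by
    ext ⟨n, y⟩
    simp only [SetLike.mem_coe, LinearMap.mem_graph_iff, Set.mem_preimage,
      LinearPMap.mem_graph_iff]
    refine ⟨fun h ↦ ⟨⟨n, hN n.2⟩, rfl, h.symm⟩, ?_⟩
    rintro ⟨x, hx, h⟩
    rw [← h, LinearMap.comp_apply, ← show x = Submodule.inclusion hN n from Subtype.ext hx]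
    rfl
  rw [graph_eq]
  exact hT.preimage (by fun_prop)

variable [CompleteSpace E]

-- The second projection of the graph is bounded below, so it is an isomorphism onto the codomain.
theorem exists_bounded_inverse_of_isClosed {T : E →ₗ.[𝕜] F} (hT : T.IsClosed) {K : ℝ}
    (hK : ∀ x : T.domain, ‖(x : E)‖ ≤ K * ‖T x‖) (hdense : DenseRange T) :
    ∃ S : F →L[𝕜] E, (∀ x : T.domain, S (T x) = x) ∧ ∀ y, ∃ x : T.domain, T x = y := by
  have : CompleteSpace T.graph := hT.completeSpace_coe
  let snd : T.graph →L[𝕜] F := ContinuousLinearMap.snd 𝕜 E F ∘L T.graph.subtypeL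
  let toGraph (x : T.domain) : T.graph := ⟨(x, T x), T.mem_graph x⟩
  have hbelow : AntilipschitzWith (max K 1).toNNReal snd :=
    ContinuousLinearMap.antilipschitz_of_bound snd fun p ↦ by
      obtain ⟨⟨a, b⟩, hp⟩ := p
      obtain ⟨x, rfl, rfl⟩ := T.mem_graph_iff.1 hp
      rw [Real.coe_toNNReal _ (by positivity), max_mul_of_nonneg _ _ (norm_nonneg _)]
      exact max_le_max (hK x) (one_mul _).ge
  have hrange : snd.range = ⊤ := by
    have hclosed : IsClosed (Set.range snd) := hbelow.isClosed_range snd.uniformContinuous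
    have hsub : Set.range T ⊆ Set.range snd := Set.range_subset_iff.2 fun x ↦ ⟨toGraph x, rfl⟩
    exact LinearMap.range_eq_top.2 <| Set.range_eq_univ.1 <|
      hclosed.closure_eq ▸ (hdense.mono hsub).closure_eq
  let e := ContinuousLinearEquiv.ofBijective snd (LinearMap.ker_eq_bot.2 hbelow.injective) hrange
  refine ⟨ContinuousLinearMap.fst 𝕜 E F ∘L T.graph.subtypeL ∘L e.symm, fun x ↦ ?_, fun y ↦ ?_⟩
  · exact congrArg (fun p : T.graph ↦ (p : E × F).1) (e.symm_apply_apply (toGraph x))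
  · obtain ⟨x, -, hx⟩ := T.mem_graph_iff.1 (e.symm y).2
    exact ⟨x, hx.trans (e.apply_symm_apply y)⟩

end ClosedOperators

section Adjoint

open scoped LinearPMap

variable {𝕜 E F : Type*} [RCLike 𝕜] [NormedAddCommGroup E] [InnerProductSpace 𝕜 E]
  [CompleteSpace E] [NormedAddCommGroup F] [InnerProductSpace 𝕜 F]

theorem adjoint_linearPMap_eq_of_isFormalAdjoint {T : E →ₗ.[𝕜] F} {S : F →ₗ.[𝕜] E}
    (hT : Dense (T.domain : Set E)) (hTS : T.IsFormalAdjoint S) (hdom : T†.domain ≤ S.domain) :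
    T† = S :=
  have hle : S ≤ T† := hTS.le_adjoint hT
  (LinearPMap.eq_of_le_of_domain_eq hle (hle.1.antisymm hdom)).symm

theorem adjoint_linearPMap_smul {T : E →ₗ.[𝕜] F} (hT : Dense (T.domain : Set E)) {a : 𝕜}
    (ha : a ≠ 0) : (a • T)† = starRingEnd 𝕜 a • T† := by
  refine adjoint_linearPMap_eq_of_isFormalAdjoint hT (fun x y ↦ ?_) fun y hy ↦ ?_
  · rw [LinearPMap.smul_apply, LinearPMap.smul_apply, inner_smul_left, inner_smul_right,
      (LinearPMap.adjoint_isFormalAdjoint hT).symm]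
  · rw [LinearPMap.smul_domain, LinearPMap.mem_adjoint_domain_iff]
    rw [LinearPMap.mem_adjoint_domain_iff] at hy
    have hcancel : ⇑(innerₛₗ 𝕜 y ∘ₗ T.toFun) = a⁻¹ • ⇑(innerₛₗ 𝕜 y ∘ₗ (a • T).toFun) := by
      ext x
      change inner 𝕜 y (T x) = a⁻¹ * inner 𝕜 y (a • T x)
      rw [inner_smul_right, inv_mul_cancel_left₀ ha]
    rw [hcancel]
    exact hy.const_smul a⁻¹

theorem adjoint_linearPMap_vadd [CompleteSpace F] {T : E →ₗ.[𝕜] F}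
    (hT : Dense (T.domain : Set E)) (M : E →L[𝕜] F) :
    ((M : E →ₗ[𝕜] F) +ᵥ T)† = (M.adjoint : F →ₗ[𝕜] E) +ᵥ T† := by
  refine adjoint_linearPMap_eq_of_isFormalAdjoint hT (fun x y ↦ ?_) fun y hy ↦ ?_
  · rw [LinearPMap.vadd_apply, LinearPMap.vadd_apply, inner_add_left, inner_add_right,
      (LinearPMap.adjoint_isFormalAdjoint hT).symm, ContinuousLinearMap.coe_coe,
      ContinuousLinearMap.coe_coe, ContinuousLinearMap.adjoint_inner_right]
  · rw [LinearPMap.vadd_domain, LinearPMap.mem_adjoint_domain_iff]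
    rw [LinearPMap.mem_adjoint_domain_iff] at hy
    have hsub : ⇑(innerₛₗ 𝕜 y ∘ₗ T.toFun) =
        fun x ↦ (innerₛₗ 𝕜 y ∘ₗ ((M : E →ₗ[𝕜] F) +ᵥ T).toFun) x - inner 𝕜 y (M x) := by
      ext x
      change inner 𝕜 y (T x) = inner 𝕜 y (M x + T x) - inner 𝕜 y (M x)
      rw [inner_add_right, add_sub_cancel_left]
    rw [hsub]
    exact hy.sub (by fun_prop)

theorem denseRange_linearPMap_of_adjoint_injective [CompleteSpace F] {T : E →ₗ.[𝕜] F}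
    (hT : Dense (T.domain : Set E)) (hinj : ∀ z : T†.domain, T† z = 0 → z = 0) :
    DenseRange T := by
  suffices T.toFun.range.topologicalClosure = ⊤ from
    Submodule.dense_iff_topologicalClosure_eq_top.2 this
  rw [Submodule.topologicalClosure_eq_top_iff, Submodule.eq_bot_iff]
  intro z hz
  have hzero : ∀ x : T.domain, inner 𝕜 (0 : E) x = inner 𝕜 z (T x) := fun x ↦ by
    rw [inner_zero_left, (Submodule.mem_orthogonal' _ _).1 hz (T x) ⟨x, rfl⟩]
  have hmem : z ∈ T†.domain := LinearPMap.mem_adjoint_domain_of_exists z ⟨0, hzero⟩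
  exact congrArg Subtype.val (hinj ⟨z, hmem⟩ (LinearPMap.adjoint_apply_eq hT _ hzero))

end Adjoint

/-- A partially defined operator is accretive with constant `c` if `Re ⟪T x, x⟫ ≥ c ‖x‖²` on its
domain: `c = 0` is plain accretivity, while `c > 0` is the coercivity that yields invertibility. -/
def IsAccretiveWith {𝕜 H : Type*} [RCLike 𝕜] [NormedAddCommGroup H] [InnerProductSpace 𝕜 H]
    (c : ℝ) (T : H →ₗ.[𝕜] H) : Prop :=
  ∀ x : T.domain, c * ‖(x : H)‖ ^ 2 ≤ RCLike.re (inner 𝕜 (T x) (x : H))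

namespace IsAccretiveWith

open scoped LinearPMap

variable {𝕜 H : Type*} [RCLike 𝕜] [NormedAddCommGroup H] [InnerProductSpace 𝕜 H]
  {c : ℝ} {T : H →ₗ.[𝕜] H}

theorem norm_le_inv_mul (hT : IsAccretiveWith c T) (hc : 0 < c) (x : T.domain) :
    ‖(x : H)‖ ≤ c⁻¹ * ‖T x‖ := by
  rcases (norm_nonneg (x : H)).eq_or_lt with hx | hx
  · rw [← hx]
    positivity
  · rw [le_inv_mul_iff₀ hc]
    refine le_of_mul_le_mul_right ?_ hx
    calc c * ‖(x : H)‖ * ‖(x : H)‖ = c * ‖(x : H)‖ ^ 2 := by ring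
      _ ≤ RCLike.re (inner 𝕜 (T x) (x : H)) := hT x
      _ ≤ ‖T x‖ * ‖(x : H)‖ := re_inner_le_norm _ _

theorem eq_zero_of_apply_eq_zero (hT : IsAccretiveWith c T) (hc : 0 < c) {x : T.domain}
    (hx : T x = 0) : x = 0 := by
  have h := hT.norm_le_inv_mul hc x
  rw [hx, norm_zero, mul_zero, norm_le_zero_iff] at h
  exact Subtype.ext h

theorem smul_ofReal (hT : IsAccretiveWith c T) {t : ℝ} (ht : 0 ≤ t) :
    IsAccretiveWith (t * c) ((t : 𝕜) • T) := fun x ↦ by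
  rw [LinearPMap.smul_apply, inner_smul_left, RCLike.conj_ofReal, RCLike.re_ofReal_mul, mul_assoc]
  exact mul_le_mul_of_nonneg_left (hT x) ht

theorem vadd (hT : IsAccretiveWith c T) {d : ℝ} {M : H →ₗ[𝕜] H}
    (hM : ∀ x, d * ‖x‖ ^ 2 ≤ RCLike.re (inner 𝕜 (M x) x)) : IsAccretiveWith (d + c) (M +ᵥ T) :=
  fun x ↦ by
    rw [LinearPMap.vadd_apply, inner_add_left, map_add, add_mul]
    exact add_le_add (hM x) (hT x)

variable [CompleteSpace H]

theorem exists_bounded_inverse (hT : IsAccretiveWith c T) (hc : 0 < c) (hclosed : T.IsClosed)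
    (hdense : Dense (T.domain : Set H)) (hadj : IsAccretiveWith c T†) :
    ∃ S : H →L[𝕜] H, (∀ x : T.domain, S (T x) = x) ∧ ∀ y, ∃ x : T.domain, T x = y :=
  exists_bounded_inverse_of_isClosed hclosed (hT.norm_le_inv_mul hc) <|
    denseRange_linearPMap_of_adjoint_injective hdense fun _ ↦ hadj.eq_zero_of_apply_eq_zero hc

theorem adjoint_vadd_smul_ofReal {A : H →ₗ.[𝕜] H} (hdense : Dense (A.domain : Set H))
    (hA : IsAccretiveWith c A†) {M : H →L[𝕜] H} {d : ℝ}
    (hM : ∀ x, d * ‖x‖ ^ 2 ≤ RCLike.re (inner 𝕜 (M x) x)) {t : ℝ} (ht : 0 < t) :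
    IsAccretiveWith (d + t * c) ((M : H →ₗ[𝕜] H) +ᵥ (t : 𝕜) • A)† := by
  rw [adjoint_linearPMap_vadd (T := (t : 𝕜) • A) hdense,
    adjoint_linearPMap_smul hdense (RCLike.ofReal_ne_zero.2 ht.ne'), RCLike.conj_ofReal]
  refine (hA.smul_ofReal ht.le).vadd fun x ↦ ?_
  rw [ContinuousLinearMap.coe_coe, ContinuousLinearMap.adjoint_inner_left, inner_re_symm]
  exact hM x

end IsAccretiveWith

section SkewSelfAdjoint

open scoped LinearPMap

variable {𝕜 H : Type*} [RCLike 𝕜] [NormedAddCommGroup H] [InnerProductSpace 𝕜 H]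
  [CompleteSpace H] {A : H →ₗ.[𝕜] H} (hdense : Dense (A.domain : Set H)) (hskew : A† = -A)
include hdense hskew

theorem isClosed_of_adjoint_eq_neg : A.IsClosed := by
  have hneg : (-1 : 𝕜) • A† = A := by
    rw [hskew]
    refine LinearPMap.ext rfl fun x hx _ ↦ ?_
    rw [LinearPMap.smul_apply, LinearPMap.neg_apply, neg_one_smul, neg_neg]
  have hclosed : A†.IsClosed := LinearPMap.adjoint_isClosed hdense
  have hne : (-1 : 𝕜) ≠ 0 := neg_ne_zero.2 one_ne_zero
  exact hneg ▸ isClosed_linearPMap_smul hclosed hne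

theorem re_inner_apply_self_of_adjoint_eq_neg (x : A.domain) :
    RCLike.re (inner 𝕜 (A x) (x : H)) = 0 := by
  have hformal := LinearPMap.adjoint_isFormalAdjoint hdense
  rw [hskew] at hformal
  have h := congrArg RCLike.re (hformal x x)
  rw [LinearPMap.neg_apply, inner_neg_left, map_neg, inner_re_symm (x : H)] at h
  linarith

theorem isAccretiveWith_zero_of_adjoint_eq_neg : IsAccretiveWith 0 A := fun x ↦ by
  rw [zero_mul, re_inner_apply_self_of_adjoint_eq_neg hdense hskew]

theorem isAccretiveWith_zero_adjoint_of_adjoint_eq_neg : IsAccretiveWith 0 A† := by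
  rw [hskew]
  intro x
  rw [zero_mul, LinearPMap.neg_apply, inner_neg_left, map_neg,
    re_inner_apply_self_of_adjoint_eq_neg hdense hskew, neg_zero]

end SkewSelfAdjoint

/-- The compression `ι_N* T ι_N` of a partially defined operator `T` to a subspace `N` of its
domain. -/
noncomputable def compression {𝕜 H : Type*} [RCLike 𝕜] [NormedAddCommGroup H]
    [InnerProductSpace 𝕜 H] (T : H →ₗ.[𝕜] H) (N : Submodule 𝕜 H) [N.HasOrthogonalProjection]
    (hN : N ≤ T.domain) : N →ₗ[𝕜] N :=
  (N.orthogonalProjectionOnto : H →ₗ[𝕜] N) ∘ₗ T.toFun ∘ₗ Submodule.inclusion hN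

theorem compression_apply {𝕜 H : Type*} [RCLike 𝕜] [NormedAddCommGroup H]
    [InnerProductSpace 𝕜 H] {T : H →ₗ.[𝕜] H} {N : Submodule 𝕜 H} [N.HasOrthogonalProjection]
    (hN : N ≤ T.domain) (n : N) :
    compression T N hN n = N.orthogonalProjectionOnto (T ⟨n, hN n.2⟩) :=
  rfl

namespace compression

variable {𝕜 H : Type*} [RCLike 𝕜] [NormedAddCommGroup H] [InnerProductSpace 𝕜 H]
  {T : H →ₗ.[𝕜] H} {N : Submodule 𝕜 H}

theorem exists_bounded_inverse [CompleteSpace H] [CompleteSpace N] (hN : N ≤ T.domain)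
    (hclosed : T.IsClosed) {c : ℝ} (hc : 0 < c) (hT : IsAccretiveWith c T) :
    ∃ J : N →L[𝕜] N, (∀ n, J (compression T N hN n) = n) ∧
      Function.Surjective (compression T N hN) := by
  let D : N →L[𝕜] N := ⟨compression T N hN,
    N.orthogonalProjectionOnto.continuous.comp (continuous_linearPMap_comp_inclusion hclosed hN)⟩
  have hcoercive : ∀ n : N, ‖n‖ ^ 2 * c ≤ ‖inner 𝕜 (D n) n‖ := fun n ↦
    calc ‖n‖ ^ 2 * c ≤ RCLike.re (inner 𝕜 (T ⟨n, hN n.2⟩) (n : H)) :=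
          (mul_comm _ _).trans_le (hT ⟨n, hN n.2⟩)
      _ = RCLike.re (inner 𝕜 (D n) n) := by
          rw [← Submodule.inner_orthogonalProjectionOnto_eq_of_mem_right]
          rfl
      _ ≤ ‖inner 𝕜 (D n) n‖ := RCLike.re_le_norm _
  obtain ⟨u, hu⟩ :=
    ContinuousLinearMap.isUnit_of_forall_le_norm_inner_map D (c := ⟨c, hc.le⟩) hc hcoercive
  refine ⟨↑u⁻¹, fun n ↦ ?_, fun n ↦ ⟨(↑u⁻¹ : N →L[𝕜] N) n, ?_⟩⟩
  · exact congrArg (fun L : N →L[𝕜] N ↦ L n) (hu ▸ u.inv_mul)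
  · exact congrArg (fun L : N →L[𝕜] N ↦ L n) (hu ▸ u.mul_inv)

theorem orthogonalProjectionOnto_apply_eq_add [N.HasOrthogonalProjection] (hN : N ≤ T.domain)
    (x : T.domain) (hx : (Nᗮ.orthogonalProjectionOnto (x : H) : H) ∈ T.domain) :
    N.orthogonalProjectionOnto (T x) =
      compression T N hN (N.orthogonalProjectionOnto (x : H)) +
        N.orthogonalProjectionOnto (T ⟨Nᗮ.orthogonalProjectionOnto (x : H), hx⟩) := by
  have hsplit : x = ⟨N.orthogonalProjectionOnto (x : H), hN (Subtype.prop _)⟩ +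
      ⟨Nᗮ.orthogonalProjectionOnto (x : H), hx⟩ :=
    Subtype.ext (N.starProjection_add_starProjection_orthogonal (x : H)).symm
  conv_lhs => rw [hsplit, T.map_add, map_add]
  rfl

end compression

section BlockDecomposition

variable {𝕜 H : Type*} [RCLike 𝕜] [NormedAddCommGroup H] [InnerProductSpace 𝕜 H]
  {A : H →ₗ.[𝕜] H} {N : Submodule 𝕜 H} [N.HasOrthogonalProjection]

theorem orthogonalProjectionOnto_orthogonal_mem_of_le {D : Submodule 𝕜 H} (hN : N ≤ D) {x : H}
    (hx : x ∈ D) : (Nᗮ.orthogonalProjectionOnto x : H) ∈ D := by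
  rw [Submodule.orthogonalProjectionOnto_orthogonal]
  exact D.sub_mem hx (hN (Subtype.prop _))

theorem apply_mem_orthogonal_of_commute
    (hcomm : ∀ x : A.domain, ∃ hx : (Nᗮ.orthogonalProjectionOnto (x : H) : H) ∈ A.domain,
      (Nᗮ.orthogonalProjectionOnto (A x) : H) = A ⟨Nᗮ.orthogonalProjectionOnto (x : H), hx⟩)
    (x : A.domain) (hx : (x : H) ∈ Nᗮ) : A x ∈ Nᗮ := by
  obtain ⟨hmem, hAx⟩ := hcomm x
  have hfix : (⟨Nᗮ.orthogonalProjectionOnto (x : H), hmem⟩ : A.domain) = x :=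
    Subtype.ext (Submodule.starProjection_eq_self_iff.2 hx)
  rw [hfix] at hAx
  exact hAx ▸ Subtype.prop _

theorem compression_vadd_smul_apply (hN : N ≤ A.domain) (M : H →L[𝕜] H) (a : 𝕜) (n : N) :
    compression ((M : H →ₗ[𝕜] H) +ᵥ a • A) N hN n =
      N.orthogonalProjectionOnto (M n) + a • N.orthogonalProjectionOnto (A ⟨n, hN n.2⟩) := by
  rw [compression_apply, LinearPMap.vadd_apply, LinearPMap.smul_apply,
    ContinuousLinearMap.coe_coe, map_add, map_smul]

theorem orthogonalProjectionOnto_vadd_smul_apply (hN : N ≤ A.domain)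
    (hA : ∀ x : A.domain, (x : H) ∈ Nᗮ → A x ∈ Nᗮ) (M : H →L[𝕜] H) (a : 𝕜)
    (x : ((M : H →ₗ[𝕜] H) +ᵥ a • A).domain) :
    N.orthogonalProjectionOnto (((M : H →ₗ[𝕜] H) +ᵥ a • A) x) =
      compression ((M : H →ₗ[𝕜] H) +ᵥ a • A) N hN (N.orthogonalProjectionOnto (x : H)) +
        N.orthogonalProjectionOnto (M (Nᗮ.orthogonalProjectionOnto (x : H))) := by
  have hr : (Nᗮ.orthogonalProjectionOnto (x : H) : H) ∈ A.domain :=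
    orthogonalProjectionOnto_orthogonal_mem_of_le hN x.2
  have hAr : N.orthogonalProjectionOnto (A ⟨Nᗮ.orthogonalProjectionOnto (x : H), hr⟩) = 0 :=
    Submodule.orthogonalProjectionOnto_apply_of_mem_orthogonal
      (hA _ (Nᗮ.orthogonalProjectionOnto (x : H)).2)
  rw [compression.orthogonalProjectionOnto_apply_eq_add (T := (M : H →ₗ[𝕜] H) +ᵥ a • A) hN x hr,
    LinearPMap.vadd_apply, LinearPMap.smul_apply, ContinuousLinearMap.coe_coe, map_add, map_smul,
    hAr, smul_zero, add_zero]

end BlockDecomposition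

open scoped LinearPMap in
theorem statement5_general {𝕜 H : Type*} [RCLike 𝕜] [NormedAddCommGroup H]
    [InnerProductSpace 𝕜 H] [Module ℝ H] [IsScalarTower ℝ 𝕜 H] [CompleteSpace H]
    (M : H →L[𝕜] H) (c : ℝ) (hc : 0 < c)
    (hM : ∀ x : H, c * ‖x‖ ^ 2 ≤ RCLike.re (inner 𝕜 (M x) x))
    (A : H →ₗ.[𝕜] H) (hA_dense : Dense (A.domain : Set H)) (hA_closed : A.IsClosed)
    (hA : IsAccretiveWith 0 A) (hA_adjoint : IsAccretiveWith 0 A†)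
    (N : Submodule 𝕜 H) [CompleteSpace N] (hN : N ≤ A.domain)
    (hAN : ∀ x : A.domain, (x : H) ∈ Nᗮ → A x ∈ Nᗮ) (ε : ℝ) (hε : 0 < ε) :
    ∃ (Binv : H →L[𝕜] H) (JN : N →L[𝕜] N),
      (∀ x : A.domain, Binv (M (x : H) + ε⁻¹ • A x) = x) ∧
      (∀ y : H, ∃ x : A.domain, M (x : H) + ε⁻¹ • A x = y) ∧
      (∀ x : N,
        JN (N.orthogonalProjectionOnto (M (x : H))
            + ε⁻¹ • N.orthogonalProjectionOnto (A ⟨(x : H), hN x.2⟩)) = x) ∧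
      (∀ y : N, ∃ x : N,
        N.orthogonalProjectionOnto (M (x : H))
            + ε⁻¹ • N.orthogonalProjectionOnto (A ⟨(x : H), hN x.2⟩) = y) ∧
      (∀ y : H, (N.orthogonalProjectionOnto (Binv y) : H)
          = JN (N.orthogonalProjectionOnto y
              - N.orthogonalProjectionOnto (M (Nᗮ.orthogonalProjectionOnto (Binv y))))) := by
  set t : ℝ := ε⁻¹
  have ht : 0 < t := inv_pos.2 hε
  let B : H →ₗ.[𝕜] H := (M : H →ₗ[𝕜] H) +ᵥ (t : 𝕜) • A
  have hB_closed : B.IsClosed := isClosed_linearPMap_vadd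
    (isClosed_linearPMap_smul hA_closed (RCLike.ofReal_ne_zero.2 ht.ne')) M
  have hB : IsAccretiveWith c B := by simpa using (hA.smul_ofReal ht.le).vadd hM
  have hB_adjoint : IsAccretiveWith c B† := by
    simpa using hA_adjoint.adjoint_vadd_smul_ofReal hA_dense hM ht
  obtain ⟨S, hSB, hB_surj⟩ := hB.exists_bounded_inverse hc hB_closed hA_dense hB_adjoint
  obtain ⟨J, hJ, hJ_surj⟩ := compression.exists_bounded_inverse (T := B) hN hB_closed hc hB
  have hB_apply (x : A.domain) : M (x : H) + t • A x = B x := by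
    rw [RCLike.real_smul_eq_coe_smul (K := 𝕜)]
    rfl
  have hcompression (n : N) : N.orthogonalProjectionOnto (M (n : H)) +
      t • N.orthogonalProjectionOnto (A ⟨(n : H), hN n.2⟩) = compression B N hN n := by
    rw [RCLike.real_smul_eq_coe_smul (K := 𝕜), compression_vadd_smul_apply]
  simp only [hB_apply, hcompression]
  refine ⟨S, J, hSB, hB_surj, hJ, hJ_surj, fun y ↦ ?_⟩
  obtain ⟨x, rfl⟩ := hB_surj y
  rw [hSB, orthogonalProjectionOnto_vadd_smul_apply hN hAN, add_sub_cancel_right, hJ]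

/-- Under Hypothesis (H), for every `ε ∈ (0, 1/(2 C_R ‖M‖))` the operator
`B_ε = M + ε⁻¹ A` (domain `dom A`) is boundedly invertible, and
`π_N B_ε⁻¹ = ι_N B_{ε,N}⁻¹ (ι_N* − ι_N* M π_R B_ε⁻¹)`, where `B_{ε,N}⁻¹` is the (unique,
bounded) inverse of `B_{ε,N} = ι_N* M ι_N + ε⁻¹ ι_N* A ι_N` on `N`. -/
theorem statement5
    {H : Type*} [NormedAddCommGroup H] [InnerProductSpace ℂ H] [CompleteSpace H]
    -- `M` is a bounded operator with `Re⟪M x, x⟫ ≥ c ‖x‖²`, `c > 0`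
    (M : H →L[ℂ] H) (c : ℝ) (hc : 0 < c)
    (hM : ∀ x : H, c * ‖x‖ ^ 2 ≤ (inner ℂ (M x) x : ℂ).re)
    -- `A` is densely defined and skew-selfadjoint
    (A : H →ₗ.[ℂ] H) (hA_dense : Dense (A.domain : Set H)) (hA_skew : A.adjoint = -A)
    -- `N` is a closed subspace, `R = Nᗮ`
    (N : Submodule ℂ H) [CompleteSpace N]
    (C_R : ℝ) (hC_R : 0 < C_R)
    -- Hypothesis (H)(a): `N ⊆ dom A` and `A π_N` is bounded
    (hHa_sub : N ≤ A.domain)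
    (hHa_bdd : ∃ Ca : ℝ, ∀ x : A.domain, (x : H) ∈ N → ‖A x‖ ≤ Ca * ‖(x : H)‖)
    -- Hypothesis (H)(b): `π_R A ⊆ A π_R`
    (hHb : ∀ x : A.domain,
      ∃ hx : ((Submodule.orthogonalProjectionOnto Nᗮ (x : H) : H)) ∈ A.domain,
        (Submodule.orthogonalProjectionOnto Nᗮ (A x) : H)
          = A ⟨(Submodule.orthogonalProjectionOnto Nᗮ (x : H) : H), hx⟩)
    -- Hypothesis (H)(c): the compression `ι_R* A ι_R`, with domain `dom(A) ∩ R`, is a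
    -- bijection onto `R` with bounded inverse of norm at most `C_R`
    (hHc : ∃ J : Nᗮ →L[ℂ] Nᗮ, ‖J‖ ≤ C_R ∧
      (∀ (x : A.domain) (hx : (x : H) ∈ Nᗮ),
        J (Submodule.orthogonalProjectionOnto Nᗮ (A x)) = ⟨(x : H), hx⟩) ∧
      (∀ y : Nᗮ, ∃ (x : A.domain) (hx : (x : H) ∈ Nᗮ),
        Submodule.orthogonalProjectionOnto Nᗮ (A x) = y))
    (ε : ℝ) (hε : ε ∈ Set.Ioo (0 : ℝ) (1 / (2 * C_R * ‖M‖))) :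
    ∃ (Binv : H →L[ℂ] H) (JN : N →L[ℂ] N),
      -- `Binv` is the bounded inverse of `B_ε = M + ε⁻¹ A`
      (∀ x : A.domain, Binv (M (x : H) + ε⁻¹ • A x) = x) ∧
      (∀ y : H, ∃ x : A.domain, M (x : H) + ε⁻¹ • A x = y) ∧
      -- `JN` is the bounded inverse of `B_{ε,N}`
      (∀ x : N,
        JN (Submodule.orthogonalProjectionOnto N (M (x : H))
            + ε⁻¹ • Submodule.orthogonalProjectionOnto N (A ⟨(x : H), hHa_sub x.2⟩)) = x) ∧
      (∀ y : N, ∃ x : N,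
        Submodule.orthogonalProjectionOnto N (M (x : H))
            + ε⁻¹ • Submodule.orthogonalProjectionOnto N (A ⟨(x : H), hHa_sub x.2⟩) = y) ∧
      -- the identity `π_N B_ε⁻¹ = ι_N B_{ε,N}⁻¹ (ι_N* − ι_N* M π_R B_ε⁻¹)`
      (∀ y : H, (Submodule.orthogonalProjectionOnto N (Binv y) : H)
          = (JN (Submodule.orthogonalProjectionOnto N y
              - Submodule.orthogonalProjectionOnto N (M ((Submodule.orthogonalProjectionOnto Nᗮ (Binv y) : H)))) : H)) :=
  statement5_general M c hc hM A hA_dense (isClosed_of_adjoint_eq_neg hA_dense hA_skew)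
    (isAccretiveWith_zero_of_adjoint_eq_neg hA_dense hA_skew)
    (isAccretiveWith_zero_adjoint_of_adjoint_eq_neg hA_dense hA_skew)
    N hHa_sub (apply_mem_orthogonal_of_commute hHb) ε hε.1
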